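/- Let α, R > 0 and let F : ℝ → (0,1) be differentiable with F and F' nonzero on [−α, α], and with L_α = sup_{|x|≤α} |F'(x)|/(F(x)(1−F(x))) and U_α = sup_{|x|≤α} log(1/(F(x)(1−F(x)))) finite. Define the loss g(x; y) = 1{y=1} log(1/F(x)) + 1{y=−1} log(1/(1−F(x))) for x ∈ [−α, α] and y ∈ {−1, +1}. Fix a sign matrix Y ∈ {−1, +1}^{d1×d2}, let Π = (π_{kl}) be a probability distribution on [d1]×[d2], and let S = ((i₁,j₁), …, (iₙ,jₙ)) be drawn i.i.d. from Π with 2 < n ≤ d1 d2. Then for any δ > 0, with probability at least 1 − δ over the draw of S, sup_{M ∈ K_max(α,R)} [ Σ_{k,l} π_{kl} g(M_{k,l}; Y_{k,l}) − (1/n) Σ_{t=1}^n g(M_{i_t,j_t}; Y_{i_t,j_t}) ] ≤ 17 L_α R √(d/n) + U_α √( 8 log(2/δ) / n ), where d = d1 + d2. -/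

import Mathlib

open scoped BigOperators
open Matrix

/-- The elementwise `ℓ∞`-norm of a matrix: `max_{k,l} |M_{k,l}|`. -/
noncomputable def linfNorm {d1 d2 : ℕ} (M : Matrix (Fin d1) (Fin d2) ℝ) : ℝ :=
  ⨆ k, ⨆ l, |M k l|

/-- The largest `ℓ₂`-norm of a row of a matrix (the `(2,∞)` operator norm). -/
noncomputable def rowMaxNorm {n k : ℕ} (U : Matrix (Fin n) (Fin k) ℝ) : ℝ :=
  ⨆ i, Real.sqrt (∑ j, (U i j) ^ 2)

/-- The max-norm of a real matrix: the infimum of `‖U‖_{2,∞} ‖V‖_{2,∞}` over all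
factorizations `M = U * Vᵀ`. -/
noncomputable def maxNorm {d1 d2 : ℕ} (M : Matrix (Fin d1) (Fin d2) ℝ) : ℝ :=
  sInf { c : ℝ | ∃ (k : ℕ) (U : Matrix (Fin d1) (Fin k) ℝ) (V : Matrix (Fin d2) (Fin k) ℝ),
    0 < k ∧ M = U * Vᵀ ∧ c = rowMaxNorm U * rowMaxNorm V }

/-- The 1-bit loss `g(x; y) = 1{y=1} log(1/F(x)) + 1{y=−1} log(1/(1−F(x)))`. -/
noncomputable def oneBitLoss (F : ℝ → ℝ) (x y : ℝ) : ℝ :=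
  (if y = 1 then Real.log (1 / F x) else 0) +
    (if y = -1 then Real.log (1 / (1 - F x)) else 0)

/-
Symmetrization bounds the expected supremum of the deviations by twice the expected Rademacher
average of the losses, and contraction (the losses are `L_α`-Lipschitz in the matrix entry) reduces
this to the Rademacher average of the entries of the matrices in the max-norm ball of radius `R`.
By Grothendieck's inequality, a linear functional on that ball is at most `49 / 8 * R` times its
maximum over the `2 ^ (d1 + d2)` rank-one sign matrices, for which Massart's finite class lemma
gives the rate `√(n (d1 + d2))`. Changing one draw changes the supremum by at most `U_α / n`, so
McDiarmid's inequality turns the bound in expectation into one in probability.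
-/

section SignVectors

variable {T : Type*}

/-- The real vector with the signs `ε` as entries: a Rademacher vector when `ε` is uniform. -/
def signVec (ε : T → ℤˣ) : T → ℝ := fun t => ((ε t : ℤ) : ℝ)

lemma signVec_eq_one_or_eq_neg_one (ε : T → ℤˣ) (t : T) : signVec ε t = 1 ∨ signVec ε t = -1 := by
  rcases Int.units_eq_one_or (ε t) with h | h <;> simp [signVec, h]

lemma signVec_mul_self (ε : T → ℤˣ) (t : T) : signVec ε t * signVec ε t = 1 := by
  rcases signVec_eq_one_or_eq_neg_one ε t with h | h <;> simp [h]

variable [DecidableEq T]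

/-- Reversal of the sign at `t`. -/
def flipSign (t : T) : (T → ℤˣ) ≃ (T → ℤˣ) := Equiv.mulRight (Pi.mulSingle t (-1))

lemma signVec_flipSign (t : T) (ε : T → ℤˣ) :
    signVec (flipSign t ε) = Function.update (signVec ε) t (-signVec ε t) := by
  ext s
  rcases eq_or_ne s t with rfl | hs
  · simp [flipSign, signVec]
  · simp [flipSign, signVec, hs]

variable [Fintype T]

lemma expect_flipSign (t : T) (f : (T → ℤˣ) → ℝ) : 𝔼 ε, f (flipSign t ε) = 𝔼 ε, f ε :=
  Fintype.expect_equiv (flipSign t) _ _ fun _ => rfl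

lemma expect_signVec_mul_signVec (s t : T) :
    𝔼 ε : T → ℤˣ, signVec ε s * signVec ε t = (1 : Matrix T T ℝ) s t := by
  rcases eq_or_ne s t with rfl | hst
  · simp [signVec_mul_self]
  · have h := expect_flipSign s fun ε => signVec ε s * signVec ε t
    simp only [signVec_flipSign, Function.update_self, Function.update_of_ne hst.symm, neg_mul,
      Finset.expect_neg_distrib] at h
    rw [Matrix.one_apply_ne hst]
    linarith

lemma expect_dotProduct_mul_dotProduct (u v : T → ℝ) :
    𝔼 ε : T → ℤˣ, (signVec ε ⬝ᵥ u) * (signVec ε ⬝ᵥ v) = u ⬝ᵥ v := by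
  calc 𝔼 ε : T → ℤˣ, (signVec ε ⬝ᵥ u) * (signVec ε ⬝ᵥ v)
      = ∑ s, ∑ t, u s * v t * 𝔼 ε : T → ℤˣ, signVec ε s * signVec ε t := by
        simp only [dotProduct, Finset.sum_mul_sum, Finset.expect_sum_comm, Finset.mul_expect]
        refine Finset.sum_congr rfl fun s _ => Finset.sum_congr rfl fun t _ =>
          Finset.expect_congr rfl fun ε _ => ?_
        ring
    _ = u ⬝ᵥ v := by simp [expect_signVec_mul_signVec, Matrix.one_apply, dotProduct]

lemma expect_exp_signVec_dotProduct (u : T → ℝ) :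
    𝔼 ε : T → ℤˣ, Real.exp (signVec ε ⬝ᵥ u) = ∏ t, Real.cosh (u t) := by
  have hcosh (x : ℝ) : Real.cosh x = ∑ s : ℤˣ, Real.exp (((s : ℤ) : ℝ) * x) / 2 := by
    rw [Real.cosh_eq, add_div]
    simp
  simp only [hcosh, Fintype.prod_sum, Finset.prod_div_distrib, ← Real.exp_sum,
    Fintype.expect_eq_sum_div_card, Finset.sum_div]
  simp [dotProduct, signVec]

lemma expect_exp_signVec_dotProduct_le (u : T → ℝ) :
    𝔼 ε : T → ℤˣ, Real.exp (signVec ε ⬝ᵥ u) ≤ Real.exp (u ⬝ᵥ u / 2) := by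
  rw [expect_exp_signVec_dotProduct, dotProduct, Finset.sum_div, Real.exp_sum]
  gcongr with t
  simpa [sq] using Real.cosh_le_exp_half_sq (u t)

end SignVectors

section RademacherAverage

variable {I T : Type*}

lemma bddAbove_range_abs_of_abs_sub_le [Nonempty I] {g m : I → ℝ}
    (hgm : ∀ i j, |g i - g j| ≤ |m i - m j|) (hm : BddAbove (Set.range fun i => |m i|)) :
    BddAbove (Set.range fun i => |g i|) := by
  obtain ⟨C, hC⟩ := hm
  let j := Classical.arbitrary I
  refine ⟨|g j| + (C + C), ?_⟩
  rintro _ ⟨i, rfl⟩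
  have hg : |g i| ≤ |g j| + |g i - g j| := by simpa using abs_add_le (g j) (g i - g j)
  linarith [hgm i j, abs_sub (m i) (m j), hC ⟨i, rfl⟩, hC ⟨j, rfl⟩]

lemma ciSup_add_add_ciSup_sub_le [Nonempty I] {a g m : I → ℝ}
    (hgm : ∀ i j, |g i - g j| ≤ |m i - m j|)
    (hadd : BddAbove (Set.range fun i => a i + m i))
    (hsub : BddAbove (Set.range fun i => a i - m i)) :
    (⨆ i, (a i + g i)) + ⨆ i, (a i - g i) ≤ (⨆ i, (a i + m i)) + ⨆ i, (a i - m i) := by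
  refine ciSup_add_ciSup_le fun i j => ?_
  have hij := (le_abs_self _).trans (hgm i j)
  have hle (k : I) := And.intro (le_ciSup hadd k) (le_ciSup hsub k)
  rcases abs_cases (m i - m j) with ⟨h, -⟩ | ⟨h, -⟩
  · linarith [(hle i).1, (hle j).2]
  · linarith [(hle j).1, (hle i).2]

variable [Fintype T]

lemma bddAbove_range_dotProduct {a : I → T → ℝ} (ha : ∀ t, BddAbove (Set.range fun i => |a i t|))
    (x : T → ℝ) : BddAbove (Set.range fun i => x ⬝ᵥ a i) := by
  choose C hC using ha
  refine ⟨∑ t, |x t| * C t, ?_⟩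
  rintro _ ⟨i, rfl⟩
  refine Finset.sum_le_sum fun t _ => (le_abs_self _).trans ?_
  rw [abs_mul]
  exact mul_le_mul_of_nonneg_left (hC t ⟨i, rfl⟩) (abs_nonneg _)

variable [DecidableEq T]

/-- The Rademacher average `E_ε sup_i ∑ t, ε t * a i t` of a family of vectors. It is not divided
by the number of coordinates. -/
noncomputable def rademacherAverage (a : I → T → ℝ) : ℝ :=
  𝔼 ε : T → ℤˣ, ⨆ i, signVec ε ⬝ᵥ a i

lemma rademacherAverage_const_mul {L : ℝ} (hL : 0 ≤ L) (a : I → T → ℝ) :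
    rademacherAverage (fun i t => L * a i t) = L * rademacherAverage a := by
  have hdot (ε : T → ℤˣ) (i : I) : signVec ε ⬝ᵥ (fun t => L * a i t) = L * (signVec ε ⬝ᵥ a i) :=
    dotProduct_smul L (signVec ε) (a i)
  simp only [rademacherAverage, hdot, ← Real.mul_iSup_of_nonneg hL, Finset.mul_expect]

lemma rademacherAverage_neg (a : I → T → ℝ) : rademacherAverage (-a) = rademacherAverage a := by
  refine Fintype.expect_equiv (Equiv.neg _) _ _ fun ε => ?_
  have hneg : signVec (-ε) = -signVec ε := by
    ext t
    simp [signVec]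
  simp [hneg]

lemma rademacherAverage_add_le [Nonempty I] {a b : I → T → ℝ}
    (ha : ∀ t, BddAbove (Set.range fun i => |a i t|))
    (hb : ∀ t, BddAbove (Set.range fun i => |b i t|)) :
    rademacherAverage (a + b) ≤ rademacherAverage a + rademacherAverage b := by
  rw [rademacherAverage, rademacherAverage, rademacherAverage, ← Finset.expect_add_distrib]
  refine Finset.expect_le_expect fun ε _ => ciSup_le fun i => ?_
  rw [Pi.add_apply, dotProduct_add]
  exact add_le_add (le_ciSup (bddAbove_range_dotProduct ha _) i)
    (le_ciSup (bddAbove_range_dotProduct hb _) i)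

lemma mul_rademacherAverage_le [Fintype I] [Nonempty I] {a : I → T → ℝ} {v : ℝ}
    (ha : ∀ i, a i ⬝ᵥ a i ≤ v) {l : ℝ} (hl : 0 ≤ l) :
    l * rademacherAverage a ≤ Real.log (Fintype.card I) + l ^ 2 * v / 2 := by
  set c := Real.log (Fintype.card I) + l ^ 2 * v / 2 with hc
  -- The tangent to `exp` at `c` bounds the maximum by a sum of exponentials.
  have hsup (ε : T → ℤˣ) :
      l * ⨆ i, signVec ε ⬝ᵥ a i ≤ c - 1 + Real.exp (-c) * ∑ i, Real.exp (signVec ε ⬝ᵥ l • a i) := by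
    rw [Real.mul_iSup_of_nonneg hl]
    refine ciSup_le fun i => ?_
    have htangent := Real.add_one_le_exp (signVec ε ⬝ᵥ l • a i - c)
    have hterm : Real.exp (signVec ε ⬝ᵥ l • a i) ≤ ∑ i, Real.exp (signVec ε ⬝ᵥ l • a i) :=
      Finset.single_le_sum (f := fun i => Real.exp (signVec ε ⬝ᵥ l • a i))
        (fun _ _ => (Real.exp_pos _).le) (Finset.mem_univ i)
    have hscaled := mul_le_mul_of_nonneg_left hterm (Real.exp_pos (-c)).le
    rw [← Real.exp_add, neg_add_eq_sub] at hscaled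
    rw [← smul_eq_mul, ← dotProduct_smul]
    linarith
  have hmgf (i : I) :
      𝔼 ε : T → ℤˣ, Real.exp (signVec ε ⬝ᵥ l • a i) ≤ Real.exp (l ^ 2 * v / 2) := by
    refine (expect_exp_signVec_dotProduct_le _).trans (Real.exp_le_exp.2 ?_)
    rw [smul_dotProduct, dotProduct_smul, smul_eq_mul, smul_eq_mul, ← mul_assoc, ← sq]
    gcongr
    exact ha i
  calc l * rademacherAverage a
      ≤ 𝔼 ε : T → ℤˣ, (c - 1 + Real.exp (-c) * ∑ i, Real.exp (signVec ε ⬝ᵥ l • a i)) := by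
        rw [rademacherAverage, Finset.mul_expect]
        exact Finset.expect_le_expect fun ε _ => hsup ε
    _ = c - 1 + Real.exp (-c) * ∑ i, 𝔼 ε : T → ℤˣ, Real.exp (signVec ε ⬝ᵥ l • a i) := by
        rw [Finset.expect_add_distrib, Fintype.expect_const, ← Finset.mul_expect,
          Finset.expect_sum_comm]
    _ ≤ c - 1 + Real.exp (-c) * ∑ _i : I, Real.exp (l ^ 2 * v / 2) := by
        gcongr with i
        exact hmgf i
    _ = c := by
        have hN : (0 : ℝ) < Fintype.card I := by exact_mod_cast Fintype.card_pos
        have hcard : ∑ _i : I, Real.exp (l ^ 2 * v / 2) = Real.exp c := by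
          simp [hc, Real.exp_add, Real.exp_log hN]
        rw [hcard, ← Real.exp_add, neg_add_cancel, Real.exp_zero]
        ring

theorem rademacherAverage_le_sqrt [Fintype I] [Nonempty I] {a : I → T → ℝ} {v : ℝ}
    (ha : ∀ i, a i ⬝ᵥ a i ≤ v) :
    rademacherAverage a ≤ √(2 * v * Real.log (Fintype.card I)) := by
  rcases le_total (rademacherAverage a) 0 with hneg | hpos
  · exact hneg.trans (Real.sqrt_nonneg _)
  have hv : 0 ≤ v :=
    (Finset.sum_nonneg fun _ _ => mul_self_nonneg _).trans (ha (Classical.arbitrary I))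
  have hquad (l : ℝ) :
      0 ≤ v / 2 * (l * l) + -rademacherAverage a * l + Real.log (Fintype.card I) := by
    rcases le_total 0 l with hl | hl
    · linarith [mul_rademacherAverage_le ha hl]
    · have hlog : 0 ≤ Real.log (Fintype.card I) := Real.log_natCast_nonneg _
      linarith [mul_nonneg_of_nonpos_of_nonpos (neg_nonpos.2 hpos) hl,
        mul_nonneg (div_nonneg hv zero_le_two) (mul_self_nonneg l)]
  refine Real.le_sqrt_of_sq_le ?_
  have hdiscrim := discrim_le_zero hquad
  rw [discrim] at hdiscrim
  linarith

lemma update_dotProduct (x : T → ℝ) (t : T) (y : ℝ) (u : T → ℝ) :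
    Function.update x t y ⬝ᵥ u = Function.update x t 0 ⬝ᵥ u + y * u t := by
  have hsplit : Function.update x t y = Function.update x t 0 + Pi.single t y := by
    ext s
    rcases eq_or_ne s t with rfl | hs <;> simp [*]
  rw [hsplit, add_dotProduct, single_dotProduct]

lemma rademacherAverage_mono_coord [Nonempty I] {a b : I → T → ℝ} (t : T)
    (heq : ∀ i s, s ≠ t → a i s = b i s) (ht : ∀ i j, |a i t - a j t| ≤ |b i t - b j t|)
    (hb : ∀ s, BddAbove (Set.range fun i => |b i s|)) :
    rademacherAverage a ≤ rademacherAverage b := by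
  have hsplit (c : I → T → ℝ) : 2 * rademacherAverage c = 𝔼 ε : T → ℤˣ,
      ((⨆ i, signVec ε ⬝ᵥ c i) + ⨆ i, signVec (flipSign t ε) ⬝ᵥ c i) := by
    rw [Finset.expect_add_distrib, expect_flipSign t fun ε => ⨆ i, signVec ε ⬝ᵥ c i, two_mul,
      rademacherAverage]
  suffices 2 * rademacherAverage a ≤ 2 * rademacherAverage b by linarith
  rw [hsplit, hsplit]
  refine Finset.expect_le_expect fun ε _ => ?_
  let r : I → ℝ := fun i => Function.update (signVec ε) t 0 ⬝ᵥ b i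
  have hr (i : I) : Function.update (signVec ε) t 0 ⬝ᵥ a i = r i :=
    Finset.sum_congr rfl fun s _ => by
      rcases eq_or_ne s t with rfl | hs
      · simp
      · rw [heq i s hs]
  have hplus (u : T → ℝ) : signVec ε ⬝ᵥ u =
      Function.update (signVec ε) t 0 ⬝ᵥ u + signVec ε t * u t := by
    rw [← update_dotProduct, Function.update_eq_self]
  have hminus (u : T → ℝ) : signVec (flipSign t ε) ⬝ᵥ u =
      Function.update (signVec ε) t 0 ⬝ᵥ u - signVec ε t * u t := by
    rw [signVec_flipSign, update_dotProduct, neg_mul, sub_eq_add_neg]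
  have hbp := bddAbove_range_dotProduct hb (signVec ε)
  have hbm := bddAbove_range_dotProduct hb (signVec (flipSign t ε))
  simp only [hminus] at hbm ⊢
  simp only [hplus] at hbp ⊢
  simp only [hr]
  refine ciSup_add_add_ciSup_sub_le (fun i j => ?_) hbp hbm
  rw [← mul_sub, ← mul_sub, abs_mul, abs_mul]
  exact mul_le_mul_of_nonneg_left (ht i j) (abs_nonneg _)

theorem rademacherAverage_le_mul_of_abs_sub_le [Nonempty I] {g m : I → T → ℝ} {L : ℝ} (hL : 0 ≤ L)
    (hgm : ∀ i j t, |g i t - g j t| ≤ L * |m i t - m j t|)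
    (hm : ∀ t, BddAbove (Set.range fun i => |m i t|)) :
    rademacherAverage g ≤ L * rademacherAverage m := by
  rw [← rademacherAverage_const_mul hL]
  set b : I → T → ℝ := fun i t => L * m i t with hb
  have hgb (i j : I) (t : T) : |g i t - g j t| ≤ |b i t - b j t| := by
    simpa [hb, ← mul_sub, abs_mul, abs_of_nonneg hL] using hgm i j t
  have hbbd (t : T) : BddAbove (Set.range fun i => |b i t|) := by
    obtain ⟨C, hC⟩ := hm t
    refine ⟨L * C, ?_⟩
    rintro _ ⟨i, rfl⟩
    simpa only [hb, abs_mul, abs_of_nonneg hL] using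
      mul_le_mul_of_nonneg_left (hC ⟨i, rfl⟩) hL
  -- Replace the coordinates of `b` by those of `g` one at a time.
  suffices h : ∀ s : Finset T,
      rademacherAverage (fun i => s.piecewise (g i) (b i)) ≤ rademacherAverage b by
    simpa using h Finset.univ
  intro s
  induction s using Finset.induction_on with
  | empty => simp
  | insert t s hts ih =>
    refine (rademacherAverage_mono_coord t (fun i u hu => ?_) (fun i j => ?_) fun u => ?_).trans ih
    · simp [hu]
    · simpa [hts] using hgb i j t
    · by_cases hu : u ∈ s
      · simpa [hu] using bddAbove_range_abs_of_abs_sub_le (fun i j => hgb i j u) (hbbd u)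
      · simpa [hu] using hbbd u

end RademacherAverage

section Sampling

variable {I Ω T : Type*} [Fintype Ω] [Fintype T]

/-- The probability that i.i.d. draws from `Ω`, indexed by `T` and each with weights `p`, come out
as `S`. The expectation of `f S` is then `iidWeight p ⬝ᵥ f`. -/
def iidWeight (p : Ω → ℝ) (S : T → Ω) : ℝ := ∏ t, p (S t)

variable [DecidableEq T]

lemma iidWeight_mem_stdSimplex {p : Ω → ℝ} (hp : p ∈ stdSimplex ℝ Ω) :
    (iidWeight p : (T → Ω) → ℝ) ∈ stdSimplex ℝ (T → Ω) :=
  ⟨fun _ => Finset.prod_nonneg fun _ _ => hp.1 _, by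
    simp only [iidWeight, ← Fintype.prod_sum (fun (_ : T) x => p x), hp.2, Finset.prod_const_one]⟩

lemma dotProduct_add_const_of_mem_stdSimplex {p : Ω → ℝ} (hp : p ∈ stdSimplex ℝ Ω) (f : Ω → ℝ)
    (c : ℝ) : (p ⬝ᵥ fun x => f x + c) = p ⬝ᵥ f + c := by
  simp only [dotProduct, mul_add, Finset.sum_add_distrib, ← Finset.sum_mul, hp.2, one_mul]

lemma iidWeight_dotProduct_comp_eval {p : Ω → ℝ} (hp : p ∈ stdSimplex ℝ Ω) (h : Ω → ℝ) (t : T) :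
    (iidWeight p ⬝ᵥ fun S : T → Ω => h (S t)) = p ⬝ᵥ h := by
  have hterm (S : T → Ω) : iidWeight p S * h (S t) =
      ∏ s, p (S s) * (if s = t then h (S s) else 1) := by
    rw [Finset.prod_mul_distrib]
    simp [iidWeight]
  simp only [dotProduct, hterm]
  rw [← Fintype.prod_sum fun (s : T) x => p x * (if s = t then h x else 1),
    Finset.prod_eq_single t (fun s _ hs => by simp [hs, hp.2]) (by simp)]
  simp

lemma iidWeight_dotProduct_comp_perm {p : Ω → ℝ} (τ : T → Equiv.Perm Ω)
    (hτ : ∀ t x, p (τ t x) = p x) (f : (T → Ω) → ℝ) :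
    (iidWeight p ⬝ᵥ fun S => f fun t => τ t (S t)) = iidWeight p ⬝ᵥ f :=
  Fintype.sum_equiv (Equiv.piCongrRight τ) _ _ fun S =>
    congrArg (· * _) (Finset.prod_congr rfl fun t _ => (hτ t (S t)).symm)

lemma iidWeight_prod_dotProduct {Ω' : Type*} [Fintype Ω'] (p : Ω → ℝ) (q : Ω' → ℝ)
    (f : (T → Ω) → (T → Ω') → ℝ) :
    (iidWeight (fun z : Ω × Ω' => p z.1 * q z.2) ⬝ᵥ fun R : T → Ω × Ω' =>
      f (fun t => (R t).1) fun t => (R t).2) =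
    iidWeight p ⬝ᵥ fun S => iidWeight q ⬝ᵥ f S := by
  simp only [dotProduct, Finset.mul_sum]
  rw [← Fintype.sum_prod_type']
  refine Fintype.sum_equiv (Equiv.arrowProdEquivProdArrow _ _ _) _ _ fun R => ?_
  simp [iidWeight, Equiv.arrowProdEquivProdArrow, Finset.prod_mul_distrib, mul_assoc]

lemma iidWeight_dotProduct_ciSup_eq_rademacherAverage {p : Ω → ℝ} {σ : Equiv.Perm Ω}
    (hσ : ∀ x, p (σ x) = p x) {h : I → Ω → ℝ} (hh : ∀ i x, h i (σ x) = -h i x) :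
    (iidWeight p ⬝ᵥ fun S : T → Ω => ⨆ i, ∑ t, h i (S t)) =
      iidWeight p ⬝ᵥ fun S : T → Ω => rademacherAverage fun i t => h i (S t) := by
  have hsigned (ε : T → ℤˣ) : (iidWeight p ⬝ᵥ fun S : T → Ω => ⨆ i, ∑ t, h i (S t)) =
      iidWeight p ⬝ᵥ fun S => ⨆ i, signVec ε ⬝ᵥ fun t => h i (S t) := by
    have hτ (t : T) (x : Ω) : p ((if ε t = 1 then 1 else σ : Equiv.Perm Ω) x) = p x := by
      split_ifs <;> simp [hσ]
    have hperm := iidWeight_dotProduct_comp_perm _ hτ fun S => ⨆ i, ∑ t, h i (S t)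
    rw [← hperm]
    congr! 4 with S i
    refine Finset.sum_congr rfl fun t _ => ?_
    rcases Int.units_eq_one_or (ε t) with ht | ht <;> simp [signVec, ht, hh]
  calc (iidWeight p ⬝ᵥ fun S : T → Ω => ⨆ i, ∑ t, h i (S t))
      = 𝔼 ε : T → ℤˣ, iidWeight p ⬝ᵥ fun S => ⨆ i, signVec ε ⬝ᵥ fun t => h i (S t) := by
        simp only [← hsigned, Fintype.expect_const]
    _ = _ := by
        simp only [dotProduct, rademacherAverage, Finset.expect_sum_comm, Finset.mul_expect]

lemma sum_sub_le_iidWeight_dotProduct_ciSup {p : Ω → ℝ} (hp : p ∈ stdSimplex ℝ Ω)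
    {g : I → Ω → ℝ} (hg : ∀ x, BddAbove (Set.range fun i => |g i x|)) (S : T → Ω) (i : I) :
    ∑ t, (p ⬝ᵥ g i - g i (S t)) ≤
      iidWeight p ⬝ᵥ fun S' : T → Ω => ⨆ i, ∑ t, (g i (S' t) - g i (S t)) := by
  calc ∑ t, (p ⬝ᵥ g i - g i (S t))
      = ∑ t, iidWeight p ⬝ᵥ fun S' : T → Ω => g i (S' t) - g i (S t) := by
        refine Finset.sum_congr rfl fun t _ => ?_
        rw [iidWeight_dotProduct_comp_eval hp fun x => g i x - g i (S t)]
        exact (dotProduct_add_const_of_mem_stdSimplex hp (g i) (-g i (S t))).symm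
    _ = iidWeight p ⬝ᵥ fun S' : T → Ω => ∑ t, (g i (S' t) - g i (S t)) := by
        simp only [dotProduct, Finset.mul_sum]
        exact Finset.sum_comm
    _ ≤ _ := by
        refine dotProduct_le_dotProduct_of_nonneg_left (fun S' => ?_)
          (iidWeight_mem_stdSimplex hp).1
        choose C hC using hg
        refine le_ciSup (f := fun i => ∑ t, (g i (S' t) - g i (S t)))
          ⟨∑ t, (C (S' t) + C (S t)), ?_⟩ i
        rintro _ ⟨i, rfl⟩
        refine Finset.sum_le_sum fun t _ => (le_abs_self _).trans ((abs_sub _ _).trans ?_)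
        exact add_le_add (hC _ ⟨i, rfl⟩) (hC _ ⟨i, rfl⟩)

theorem iidWeight_dotProduct_ciSup_le_two_mul [Nonempty I] {p : Ω → ℝ} (hp : p ∈ stdSimplex ℝ Ω)
    {g : I → Ω → ℝ} (hg : ∀ x, BddAbove (Set.range fun i => |g i x|)) :
    (iidWeight p ⬝ᵥ fun S : T → Ω => ⨆ i, ∑ t, (p ⬝ᵥ g i - g i (S t))) ≤
      2 * (iidWeight p ⬝ᵥ fun S : T → Ω => rademacherAverage fun i t => g i (S t)) := by
  have hw := iidWeight_mem_stdSimplex (T := T) hp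
  set r : (T → Ω) → ℝ := fun S => rademacherAverage fun i t => g i (S t)
  -- Each draw from `Ω × Ω` is a sample point together with its ghost copy.
  let q : Ω × Ω → ℝ := fun z => p z.1 * p z.2
  let h : I → Ω × Ω → ℝ := fun i z => g i z.2 - g i z.1
  have hsplit (S S' : T → Ω) :
      rademacherAverage (fun i t => g i (S' t) - g i (S t)) ≤ r S' + r S := by
    have hadd := rademacherAverage_add_le (a := fun i t => g i (S' t))
      (b := -fun i t => g i (S t)) (fun t => hg _) (fun t => by simpa using hg (S t))
    rwa [rademacherAverage_neg] at hadd
  calc (iidWeight p ⬝ᵥ fun S : T → Ω => ⨆ i, ∑ t, (p ⬝ᵥ g i - g i (S t)))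
      ≤ iidWeight p ⬝ᵥ fun S : T → Ω => iidWeight p ⬝ᵥ fun S' : T → Ω =>
          ⨆ i, ∑ t, (g i (S' t) - g i (S t)) :=
        dotProduct_le_dotProduct_of_nonneg_left
          (fun S => ciSup_le (sum_sub_le_iidWeight_dotProduct_ciSup hp hg S)) hw.1
    _ = iidWeight q ⬝ᵥ fun R : T → Ω × Ω => ⨆ i, ∑ t, h i (R t) :=
        (iidWeight_prod_dotProduct p p fun S S' => ⨆ i, ∑ t, (g i (S' t) - g i (S t))).symm
    _ = iidWeight q ⬝ᵥ fun R : T → Ω × Ω => rademacherAverage fun i t => h i (R t) :=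
        iidWeight_dotProduct_ciSup_eq_rademacherAverage (σ := Equiv.prodComm Ω Ω)
          (fun z => mul_comm _ _) (fun i z => (neg_sub _ _).symm)
    _ = iidWeight p ⬝ᵥ fun S : T → Ω => iidWeight p ⬝ᵥ fun S' : T → Ω =>
          rademacherAverage fun i t => g i (S' t) - g i (S t) :=
        iidWeight_prod_dotProduct p p fun S S' =>
          rademacherAverage fun i t => g i (S' t) - g i (S t)
    _ ≤ iidWeight p ⬝ᵥ fun S : T → Ω => iidWeight p ⬝ᵥ fun S' : T → Ω => (r S' + r S) :=
        dotProduct_le_dotProduct_of_nonneg_left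
          (fun S => dotProduct_le_dotProduct_of_nonneg_left (hsplit S) hw.1) hw.1
    _ = 2 * (iidWeight p ⬝ᵥ r) := by
        simp only [dotProduct_add_const_of_mem_stdSimplex hw, add_comm (iidWeight p ⬝ᵥ r) (r _)]
        ring

end Sampling

section BoundedDifferences

variable {Ω : Type*} [Fintype Ω]

lemma dotProduct_exp_le_of_forall_le_add {p : Ω → ℝ} (hp : p ∈ stdSimplex ℝ Ω) {h : Ω → ℝ} {c : ℝ}
    (hh : ∀ x y, h x ≤ h y + c) (l : ℝ) :
    (p ⬝ᵥ fun x => Real.exp (l * h x)) ≤ Real.exp (l * (p ⬝ᵥ h) + l ^ 2 * c ^ 2 / 8) := by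
  let _ : MeasurableSpace Ω := ⊤
  have hsum : ∑ x, ENNReal.ofReal (p x) = 1 := by
    rw [← ENNReal.ofReal_sum_of_nonneg fun x _ => hp.1 x, hp.2, ENNReal.ofReal_one]
  let P := PMF.ofFintype (fun x => ENNReal.ofReal (p x)) hsum
  have hP (f : Ω → ℝ) : ∫ x, f x ∂P.toMeasure = p ⬝ᵥ f := by
    simp [PMF.integral_eq_sum, P, dotProduct, ENNReal.toReal_ofReal (hp.1 _)]
  have hmem (x : Ω) : h x ∈ Set.Icc (⨅ y, h y) ((⨅ y, h y) + c) := by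
    have : Nonempty Ω := ⟨x⟩
    refine ⟨ciInf_le (Set.finite_range h).bddBelow x, ?_⟩
    rw [← sub_le_iff_le_add]
    exact le_ciInf fun y => sub_le_iff_le_add.2 (hh x y)
  have hsub := (ProbabilityTheory.hasSubgaussianMGF_of_mem_Icc (μ := P.toMeasure)
    (measurable_from_top (f := h)).aemeasurable (Filter.Eventually.of_forall hmem)).mgf_le l
  have hcoe : (((‖(⨅ y, h y) + c - ⨅ y, h y‖₊ / 2) ^ 2 : NNReal) : ℝ) = c ^ 2 / 4 := by
    simp [div_pow]
    norm_num
  simp only [ProbabilityTheory.mgf, hP, hcoe] at hsub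
  calc (p ⬝ᵥ fun x => Real.exp (l * h x))
      = Real.exp (l * (p ⬝ᵥ h)) * (p ⬝ᵥ fun x => Real.exp (l * (h x - p ⬝ᵥ h))) := by
        simp only [dotProduct, Finset.mul_sum, mul_sub, Real.exp_sub]
        exact Finset.sum_congr rfl fun x _ => by field_simp
    _ ≤ Real.exp (l * (p ⬝ᵥ h)) * Real.exp (c ^ 2 / 4 * l ^ 2 / 2) := by gcongr
    _ = _ := by
        rw [← Real.exp_add]
        ring_nf

variable {n : ℕ}

lemma iidWeight_dotProduct_cons (p : Ω → ℝ) (f : (Fin (n + 1) → Ω) → ℝ) :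
    iidWeight p ⬝ᵥ f = p ⬝ᵥ fun x => iidWeight p ⬝ᵥ fun S => f (Fin.cons x S) := by
  simp only [dotProduct, Finset.mul_sum]
  rw [← Fintype.sum_prod_type', ← (Fin.consEquiv fun _ => Ω).sum_comp]
  simp [iidWeight, Fin.consEquiv, Fin.prod_univ_succ, mul_assoc]

/-- Changing one argument of `f` increases its value by at most `c`. -/
def HasBoundedDifferences (f : (Fin n → Ω) → ℝ) (c : ℝ) : Prop :=
  ∀ S t x, f (Function.update S t x) ≤ f S + c

theorem HasBoundedDifferences.iidWeight_dotProduct_exp_le {p : Ω → ℝ} (hp : p ∈ stdSimplex ℝ Ω)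
    {f : (Fin n → Ω) → ℝ} {c : ℝ} (hf : HasBoundedDifferences f c) (l : ℝ) :
    (iidWeight p ⬝ᵥ fun S => Real.exp (l * f S)) ≤
      Real.exp (l * (iidWeight p ⬝ᵥ f) + n * (l ^ 2 * c ^ 2 / 8)) := by
  induction n with
  | zero => simp [dotProduct, iidWeight]
  | succ n ih =>
    set h : Ω → ℝ := fun x => iidWeight p ⬝ᵥ fun S : Fin n → Ω => f (Fin.cons x S) with hh
    have hhc (x y : Ω) : h x ≤ h y + c := by
      rw [hh, ← dotProduct_add_const_of_mem_stdSimplex (iidWeight_mem_stdSimplex hp)]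
      refine dotProduct_le_dotProduct_of_nonneg_left (fun S => ?_) (iidWeight_mem_stdSimplex hp).1
      simpa using hf (Fin.cons y S) 0 x
    calc (iidWeight p ⬝ᵥ fun S => Real.exp (l * f S))
        = p ⬝ᵥ fun x => iidWeight p ⬝ᵥ fun S => Real.exp (l * f (Fin.cons x S)) :=
          iidWeight_dotProduct_cons _ _
      _ ≤ p ⬝ᵥ fun x => Real.exp (l * h x + n * (l ^ 2 * c ^ 2 / 8)) := by
          refine dotProduct_le_dotProduct_of_nonneg_left (fun x => ih fun S t y => ?_) hp.1
          simpa [Fin.cons_update] using hf (Fin.cons x S) t.succ y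
      _ = Real.exp (n * (l ^ 2 * c ^ 2 / 8)) * (p ⬝ᵥ fun x => Real.exp (l * h x)) := by
          simp only [Real.exp_add, dotProduct, Finset.mul_sum]
          exact Finset.sum_congr rfl fun x _ => by ring
      _ ≤ Real.exp (n * (l ^ 2 * c ^ 2 / 8)) * Real.exp (l * (p ⬝ᵥ h) + l ^ 2 * c ^ 2 / 8) := by
          gcongr
          exact dotProduct_exp_le_of_forall_le_add hp hhc l
      _ = _ := by
          rw [← Real.exp_add, iidWeight_dotProduct_cons p f]
          congr 1
          push_cast
          ring

theorem HasBoundedDifferences.one_sub_exp_le_sum_indicator {p : Ω → ℝ} (hp : p ∈ stdSimplex ℝ Ω)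
    {f : (Fin n → Ω) → ℝ} {c : ℝ} (hf : HasBoundedDifferences f c) {e : ℝ} (he : 0 ≤ e) :
    1 - Real.exp (-(2 * e ^ 2 / (n * c ^ 2))) ≤
      ∑ S, {S | f S ≤ iidWeight p ⬝ᵥ f + e}.indicator (iidWeight p) S := by
  have hw := iidWeight_mem_stdSimplex (T := Fin n) hp
  set μ := iidWeight p ⬝ᵥ f
  set l := 4 * e / (n * c ^ 2) with hl
  have hl0 : 0 ≤ l := by positivity
  have hmarkov (S : Fin n → Ω) : iidWeight p S - iidWeight p S * Real.exp (l * f S) *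
      Real.exp (-(l * (μ + e))) ≤ {S | f S ≤ μ + e}.indicator (iidWeight p) S := by
    have hwS := hw.1 S
    rw [mul_assoc, ← Real.exp_add]
    by_cases hS : f S ≤ μ + e
    · rw [Set.indicator_of_mem (by exact hS)]
      exact sub_le_self _ (by positivity)
    · rw [Set.indicator_of_notMem (by exact hS), sub_nonpos]
      refine le_mul_of_one_le_right hwS (Real.one_le_exp ?_)
      linarith [mul_le_mul_of_nonneg_left (not_le.1 hS).le hl0]
  have hexponent : l * μ + n * (l ^ 2 * c ^ 2 / 8) + -(l * (μ + e)) =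
      -(2 * e ^ 2 / (n * c ^ 2)) := by
    rcases eq_or_ne (n * c ^ 2) 0 with h0 | _h0
    · simp [hl, h0]
    · rw [hl]
      field_simp
      ring
  have hmgf : (∑ S, iidWeight p S * Real.exp (l * f S)) * Real.exp (-(l * (μ + e))) ≤
      Real.exp (-(2 * e ^ 2 / (n * c ^ 2))) := by
    rw [← hexponent, Real.exp_add]
    gcongr
    exact hf.iidWeight_dotProduct_exp_le hp l
  calc 1 - Real.exp (-(2 * e ^ 2 / (n * c ^ 2)))
      ≤ 1 - (∑ S, iidWeight p S * Real.exp (l * f S)) * Real.exp (-(l * (μ + e))) := by gcongr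
    _ = ∑ S, (iidWeight p S - iidWeight p S * Real.exp (l * f S) * Real.exp (-(l * (μ + e)))) := by
        rw [Finset.sum_sub_distrib, hw.2, Finset.sum_mul]
    _ ≤ _ := Finset.sum_le_sum fun S _ => hmarkov S

end BoundedDifferences

section UniformDeviation

variable {I Ω : Type*} [Nonempty I] [Fintype Ω] {p : Ω → ℝ} {n : ℕ} {g m : I → Ω → ℝ} {U L : ℝ}

lemma hasBoundedDifferences_ciSup (hg : ∀ i x, g i x ∈ Set.Icc 0 U) :
    HasBoundedDifferences
      (fun S : Fin n → Ω => ⨆ i, (p ⬝ᵥ g i - (1 / n : ℝ) * ∑ t, g i (S t))) (U / n) := by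
  intro S t x
  have hchange (i : I) :
      ∑ s, g i (S s) - ∑ s, g i (Function.update S t x s) = g i (S t) - g i x := by
    rw [← Finset.sum_sub_distrib, Fintype.sum_eq_single t fun s hs => by simp [hs]]
    simp
  have hbdd : BddAbove (Set.range fun i => p ⬝ᵥ g i - (1 / n : ℝ) * ∑ t, g i (S t)) := by
    refine ⟨∑ x, |p x| * U, ?_⟩
    rintro _ ⟨i, rfl⟩
    have hsum : 0 ≤ ∑ t, g i (S t) := Finset.sum_nonneg fun t _ => (hg i _).1
    refine (sub_le_self _ (by positivity)).trans (Finset.sum_le_sum fun x _ => ?_)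
    exact mul_le_mul (le_abs_self _) (hg i x).2 (hg i x).1 (abs_nonneg _)
  refine ciSup_le fun i => le_trans ?_ (add_le_add_left (le_ciSup hbdd i) _)
  have hscaled := mul_le_mul_of_nonneg_left
    ((hchange i).trans_le ((sub_le_self _ (hg i x).1).trans (hg i (S t)).2))
    (by positivity : (0 : ℝ) ≤ 1 / n)
  rw [mul_sub, one_div_mul_eq_div (n : ℝ) U] at hscaled
  linarith

lemma iidWeight_dotProduct_ciSup_sub_mean_le (hn : 0 < n) (hp : p ∈ stdSimplex ℝ Ω)
    (hg : ∀ x, BddAbove (Set.range fun i => |g i x|)) {ρ : ℝ}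
    (hρ : ∀ S : Fin n → Ω, rademacherAverage (fun i t => g i (S t)) ≤ ρ) :
    (iidWeight p ⬝ᵥ fun S : Fin n → Ω => ⨆ i, (p ⬝ᵥ g i - (1 / n : ℝ) * ∑ t, g i (S t))) ≤
      2 * ρ / n := by
  have hw := iidWeight_mem_stdSimplex (T := Fin n) hp
  have hscale (S : Fin n → Ω) : ⨆ i, (p ⬝ᵥ g i - (1 / n : ℝ) * ∑ t, g i (S t)) =
      (1 / n : ℝ) * ⨆ i, ∑ t, (p ⬝ᵥ g i - g i (S t)) := by
    rw [Real.mul_iSup_of_nonneg (by positivity)]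
    refine iSup_congr fun i => ?_
    rw [Finset.sum_sub_distrib, Finset.sum_const, Finset.card_univ, Fintype.card_fin, nsmul_eq_mul]
    field_simp
  calc (iidWeight p ⬝ᵥ fun S : Fin n → Ω => ⨆ i, (p ⬝ᵥ g i - (1 / n : ℝ) * ∑ t, g i (S t)))
      = (1 / n : ℝ) * (iidWeight p ⬝ᵥ fun S : Fin n → Ω => ⨆ i, ∑ t, (p ⬝ᵥ g i - g i (S t))) := by
        simp only [hscale]
        exact dotProduct_smul (1 / n : ℝ) _ _
    _ ≤ (1 / n : ℝ) *
          (2 * (iidWeight p ⬝ᵥ fun S : Fin n → Ω => rademacherAverage fun i t => g i (S t))) := by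
        gcongr
        exact iidWeight_dotProduct_ciSup_le_two_mul hp hg
    _ ≤ (1 / n : ℝ) * (2 * (iidWeight p ⬝ᵥ fun _ : Fin n → Ω => ρ)) := by
        gcongr
        exact dotProduct_le_dotProduct_of_nonneg_left hρ hw.1
    _ = 2 * ρ / n := by
        rw [dotProduct, ← Finset.sum_mul, hw.2]
        ring

theorem one_sub_exp_le_sum_indicator_ciSup_sub_mean_le (hn : 0 < n) (hp : p ∈ stdSimplex ℝ Ω)
    (hg : ∀ i x, g i x ∈ Set.Icc 0 U) (hL : 0 ≤ L)
    (hgm : ∀ i j x, |g i x - g j x| ≤ L * |m i x - m j x|)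
    (hm : ∀ x, BddAbove (Set.range fun i => |m i x|)) {ρ : ℝ}
    (hρ : ∀ S : Fin n → Ω, rademacherAverage (fun i t => m i (S t)) ≤ ρ) {e : ℝ} (he : 0 ≤ e) :
    1 - Real.exp (-(2 * n * e ^ 2 / U ^ 2)) ≤
      ∑ S, {S : Fin n → Ω | ⨆ i, (p ⬝ᵥ g i - (1 / n : ℝ) * ∑ t, g i (S t)) ≤
        2 * (L * ρ) / n + e}.indicator (iidWeight p) S := by
  have hgbdd (x : Ω) : BddAbove (Set.range fun i => |g i x|) := by
    refine ⟨U, ?_⟩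
    rintro _ ⟨i, rfl⟩
    exact (abs_of_nonneg (hg i x).1).trans_le (hg i x).2
  have hmean := iidWeight_dotProduct_ciSup_sub_mean_le hn hp hgbdd fun S =>
    (rademacherAverage_le_mul_of_abs_sub_le hL (fun i j t => hgm i j (S t)) fun t => hm (S t)).trans
      (mul_le_mul_of_nonneg_left (hρ S) hL)
  have htail :=
    (hasBoundedDifferences_ciSup (p := p) (n := n) hg).one_sub_exp_le_sum_indicator hp he
  have hexponent : 2 * e ^ 2 / (n * (U / n) ^ 2) = 2 * n * e ^ 2 / U ^ 2 := by
    field_simp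
  rw [hexponent] at htail
  refine htail.trans (Finset.sum_le_sum fun S _ => ?_)
  refine Set.indicator_le_indicator_of_subset (fun S hS => ?_)
    (fun S => (iidWeight_mem_stdSimplex hp).1 S) S
  exact le_trans hS (add_le_add_left hmean e)

lemma exp_neg_two_mul_sq_div_le (hn : 0 < n) (hU : U ≠ 0) {δ : ℝ} (hδ : 0 < δ) (hδ1 : δ ≤ 1) :
    Real.exp (-(2 * n * (U * √(8 * Real.log (2 / δ) / n)) ^ 2 / U ^ 2)) ≤ δ := by
  have hlog : 0 ≤ Real.log (2 / δ) := Real.log_nonneg (by rw [le_div_iff₀ hδ]; linarith)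
  have hexponent : 2 * n * (U * √(8 * Real.log (2 / δ) / n)) ^ 2 / U ^ 2 =
      16 * Real.log (2 / δ) := by
    rw [mul_pow, Real.sq_sqrt (by positivity)]
    field_simp
    ring
  rw [hexponent]
  calc Real.exp (-(16 * Real.log (2 / δ))) ≤ Real.exp (-Real.log (2 / δ)) :=
        Real.exp_le_exp.2 (by linarith)
    _ = δ / 2 := by rw [Real.exp_neg, Real.exp_log (by positivity), inv_div]
    _ ≤ δ := by linarith

theorem one_sub_le_sum_indicator_ciSup_sub_mean_le (hn : 0 < n) (hp : p ∈ stdSimplex ℝ Ω)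
    (hU : 0 < U) (hg : ∀ i x, g i x ∈ Set.Icc 0 U) (hL : 0 ≤ L)
    (hgm : ∀ i j x, |g i x - g j x| ≤ L * |m i x - m j x|)
    (hm : ∀ x, BddAbove (Set.range fun i => |m i x|)) {ρ : ℝ}
    (hρ : ∀ S : Fin n → Ω, rademacherAverage (fun i t => m i (S t)) ≤ ρ) {δ : ℝ} (hδ : 0 < δ) :
    1 - δ ≤ ∑ S, {S : Fin n → Ω | ⨆ i, (p ⬝ᵥ g i - (1 / n : ℝ) * ∑ t, g i (S t)) ≤
      2 * (L * ρ) / n + U * √(8 * Real.log (2 / δ) / n)}.indicator (iidWeight p) S := by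
  rcases le_total δ 1 with hδ1 | hδ1
  · exact (sub_le_sub_left (exp_neg_two_mul_sq_div_le hn hU.ne' hδ hδ1) 1).trans <|
      one_sub_exp_le_sum_indicator_ciSup_sub_mean_le hn hp hg hL hgm hm hρ (by positivity)
  · exact (sub_nonpos.2 hδ1).trans <| Finset.sum_nonneg fun S _ =>
      Set.indicator_nonneg (fun S _ => (iidWeight_mem_stdSimplex hp).1 S) S

end UniformDeviation

section Truncation

/-- The number of `[-c, c]` closest to `x`, for `0 ≤ c`. -/
noncomputable def truncate (c x : ℝ) : ℝ := max (-c) (min x c)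

variable {c : ℝ}

lemma abs_truncate_le (hc : 0 ≤ c) (x : ℝ) : |truncate c x| ≤ c :=
  abs_le.2 ⟨le_max_left _ _, max_le (by linarith) (min_le_right _ _)⟩

lemma truncate_of_abs_le {x : ℝ} (hx : |x| ≤ c) : truncate c x = x := by
  rw [truncate, min_eq_left (abs_le.1 hx).2, max_eq_right (abs_le.1 hx).1]

lemma abs_truncate_le_abs (hc : 0 ≤ c) (x : ℝ) : |truncate c x| ≤ |x| := by
  rcases le_total |x| c with hx | hx
  · rw [truncate_of_abs_le hx]
  · exact (abs_truncate_le hc x).trans hx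

lemma abs_sub_truncate (hc : 0 ≤ c) {x : ℝ} (hx : c ≤ |x|) : |x - truncate c x| = |x| - c := by
  rcases le_total 0 x with h0 | h0
  · rw [abs_of_nonneg h0] at hx ⊢
    rw [truncate, min_eq_right hx, max_eq_right (by linarith), abs_of_nonneg (by linarith)]
  · rw [abs_of_nonpos h0] at hx ⊢
    rw [truncate, min_eq_left (by linarith), max_eq_left (by linarith),
      abs_of_nonpos (by linarith)]
    ring

lemma sq_sub_truncate_le (hc : 0 ≤ c) (x : ℝ) :
    (x - truncate c x) ^ 2 ≤
      Real.exp (-(2 * c + 2)) * (Real.exp (2 * x) + Real.exp (-(2 * x))) := by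
  rcases le_total |x| c with hx | hx
  · rw [truncate_of_abs_le hx, sub_self, zero_pow two_ne_zero]
    positivity
  calc (x - truncate c x) ^ 2 = (|x| - c) ^ 2 := by rw [← sq_abs, abs_sub_truncate hc hx]
    _ ≤ Real.exp (|x| - c - 1) ^ 2 := by
        have htangent := Real.add_one_le_exp (|x| - c - 1)
        exact pow_le_pow_left₀ (sub_nonneg.2 hx) (by linarith) 2
    _ = Real.exp (-(2 * c + 2)) * Real.exp (2 * |x|) := by
        rw [← Real.exp_nat_mul, ← Real.exp_add]
        push_cast
        ring_nf
    _ ≤ _ := by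
        gcongr
        rcases abs_cases x with ⟨h, -⟩ | ⟨h, -⟩ <;> rw [h]
        · exact le_add_of_nonneg_right (Real.exp_pos _).le
        · rw [mul_neg]
          exact le_add_of_nonneg_left (Real.exp_pos _).le

variable {κ : Type*} [Fintype κ] [DecidableEq κ]

lemma expect_sq_signVec_dotProduct_sub_truncate_le {u : κ → ℝ} (hu : u ⬝ᵥ u ≤ 1) (hc : 0 ≤ c) :
    𝔼 ε : κ → ℤˣ, (signVec ε ⬝ᵥ u - truncate c (signVec ε ⬝ᵥ u)) ^ 2 ≤
      2 * Real.exp (-(2 * c)) := by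
  have hmgf (l : ℝ) (hl : l ^ 2 = 4) :
      𝔼 ε : κ → ℤˣ, Real.exp (l * (signVec ε ⬝ᵥ u)) ≤ Real.exp 2 := by
    have hexponent : (l • u) ⬝ᵥ (l • u) / 2 ≤ 2 := by
      rw [smul_dotProduct, dotProduct_smul, smul_eq_mul, smul_eq_mul, ← mul_assoc, ← sq, hl]
      linarith
    simpa using (expect_exp_signVec_dotProduct_le (l • u)).trans (Real.exp_le_exp.2 hexponent)
  calc 𝔼 ε : κ → ℤˣ, (signVec ε ⬝ᵥ u - truncate c (signVec ε ⬝ᵥ u)) ^ 2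
      ≤ 𝔼 ε : κ → ℤˣ, Real.exp (-(2 * c + 2)) *
          (Real.exp (2 * (signVec ε ⬝ᵥ u)) + Real.exp (-(2 * (signVec ε ⬝ᵥ u)))) :=
        Finset.expect_le_expect fun ε _ => sq_sub_truncate_le hc _
    _ ≤ Real.exp (-(2 * c + 2)) * (Real.exp 2 + Real.exp 2) := by
        rw [← Finset.mul_expect, Finset.expect_add_distrib]
        simp only [← neg_mul]
        gcongr
        · exact hmgf 2 (by norm_num)
        · exact hmgf (-2) (by norm_num)
    _ = 2 * Real.exp (-(2 * c)) := by
        rw [← two_mul, mul_left_comm, ← Real.exp_add]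
        ring_nf

end Truncation

section Grothendieck

variable {A B : Type*}

/-- The unit ball of the max-norm: the matrices of inner products `⟨U i, V j⟩` of vectors of
length at most one, in any finite dimension. -/
def maxNormUnitBall (A B : Type*) : Set (Matrix A B ℝ) :=
  {M | ∃ (κ : Type) (_ : Fintype κ) (U : Matrix A κ ℝ) (V : Matrix B κ ℝ),
    (∀ i, U i ⬝ᵥ U i ≤ 1) ∧ (∀ j, V j ⬝ᵥ V j ≤ 1) ∧ M = U * Vᵀ}

lemma exists_eq_smul_of_dotProduct_self_le_sq {κ : Type*} [Fintype κ] {W : Matrix A κ ℝ} {r : ℝ}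
    (hW : ∀ i, W i ⬝ᵥ W i ≤ r ^ 2) :
    ∃ W' : Matrix A κ ℝ, (∀ i, W' i ⬝ᵥ W' i ≤ 1) ∧ W = r • W' := by
  refine ⟨r⁻¹ • W, fun i => ?_, ?_⟩
  · calc (r⁻¹ • W i) ⬝ᵥ (r⁻¹ • W i) = r⁻¹ ^ 2 * (W i ⬝ᵥ W i) := by
          rw [smul_dotProduct, dotProduct_smul, smul_eq_mul, smul_eq_mul, ← mul_assoc, ← sq]
      _ ≤ r⁻¹ ^ 2 * r ^ 2 := by
          gcongr
          exact hW i
      _ ≤ 1 := by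
          rw [← mul_pow]
          rcases eq_or_ne r 0 with rfl | hr <;> simp [*]
  · rcases eq_or_ne r 0 with rfl | hr
    · ext i k
      have hsq : W i ⬝ᵥ W i ≤ 0 := by simpa using hW i
      have hzero : W i = 0 :=
        dotProduct_self_eq_zero.1 (hsq.antisymm (Finset.sum_nonneg fun _ _ => mul_self_nonneg _))
      simp [hzero]
    · rw [smul_inv_smul₀ hr]

lemma exists_mem_maxNormUnitBall_mul_transpose_eq_smul {κ : Type} [Fintype κ] {U : Matrix A κ ℝ}
    {V : Matrix B κ ℝ} {r s : ℝ} (hU : ∀ i, U i ⬝ᵥ U i ≤ r ^ 2) (hV : ∀ j, V j ⬝ᵥ V j ≤ s ^ 2) :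
    ∃ M ∈ maxNormUnitBall A B, U * Vᵀ = (r * s) • M := by
  obtain ⟨U', hU', rfl⟩ := exists_eq_smul_of_dotProduct_self_le_sq hU
  obtain ⟨V', hV', rfl⟩ := exists_eq_smul_of_dotProduct_self_le_sq hV
  refine ⟨_, ⟨κ, _, U', V', hU', hV', rfl⟩, ?_⟩
  rw [transpose_smul, Matrix.smul_mul, Matrix.mul_smul, smul_smul]

lemma expect_vecMulVec_apply {κ : Type*} [Fintype κ] (X : κ → A → ℝ) (Y : κ → B → ℝ) (i : A)
    (j : B) : (𝔼 k, vecMulVec (X k) (Y k)) i j = 𝔼 k, X k i * Y k j :=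
  map_expect (entryLinearMap ℚ≥0 ℝ i j) _ _

lemma expect_vecMulVec_signVec_dotProduct {κ : Type*} [Fintype κ] [DecidableEq κ]
    (U : Matrix A κ ℝ) (V : Matrix B κ ℝ) :
    𝔼 ε : κ → ℤˣ, vecMulVec (fun i => signVec ε ⬝ᵥ U i) (fun j => signVec ε ⬝ᵥ V j) = U * Vᵀ := by
  ext i j
  rw [expect_vecMulVec_apply, expect_dotProduct_mul_dotProduct]
  rfl

lemma exists_mem_maxNormUnitBall_expect_vecMulVec_eq_smul {κ : Type} [Fintype κ]
    {X : κ → A → ℝ} {Y : κ → B → ℝ} {r s : ℝ} (hX : ∀ i, 𝔼 k, X k i ^ 2 ≤ r ^ 2)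
    (hY : ∀ j, 𝔼 k, Y k j ^ 2 ≤ s ^ 2) :
    ∃ M ∈ maxNormUnitBall A B, 𝔼 k, vecMulVec (X k) (Y k) = (r * s) • M := by
  let N : ℝ := (Fintype.card κ : ℕ)
  have hsqrt : √N * √N = N := Real.mul_self_sqrt (Nat.cast_nonneg _)
  have hentry (x y : κ → ℝ) :
      (fun k => x k / √N) ⬝ᵥ (fun k => y k / √N) = 𝔼 k, x k * y k := by
    rw [Fintype.expect_eq_sum_div_card, Finset.sum_div]
    exact Finset.sum_congr rfl fun k _ => by rw [div_mul_div_comm, hsqrt]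
  have hprod : 𝔼 k, vecMulVec (X k) (Y k) =
      (of fun i k => X k i / √N) * (of fun j k => Y k j / √N)ᵀ := by
    ext i j
    rw [expect_vecMulVec_apply, ← hentry]
    rfl
  rw [hprod]
  refine exists_mem_maxNormUnitBall_mul_transpose_eq_smul (fun i => ?_) fun j => ?_
  · exact (hentry (X · i) (X · i)).trans_le (by simpa only [sq] using hX i)
  · exact (hentry (Y · j) (Y · j)).trans_le (by simpa only [sq] using hY j)

lemma abs_le_one_of_mem_maxNormUnitBall {M : Matrix A B ℝ} (hM : M ∈ maxNormUnitBall A B) (i : A)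
    (j : B) : |M i j| ≤ 1 := by
  obtain ⟨κ, _, U, V, hU, hV, rfl⟩ := hM
  have hadd : 0 ≤ (U i + V j) ⬝ᵥ (U i + V j) := Finset.sum_nonneg fun _ _ => mul_self_nonneg _
  have hsub : 0 ≤ (U i - V j) ⬝ᵥ (U i - V j) := Finset.sum_nonneg fun _ _ => mul_self_nonneg _
  simp only [add_dotProduct, dotProduct_add, sub_dotProduct, dotProduct_sub,
    dotProduct_comm (V j) (U i)] at hadd hsub
  change |U i ⬝ᵥ V j| ≤ 1
  rw [abs_le]
  constructor <;> linarith [hU i, hV j]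

lemma two_mul_exp_neg_seven_halves_le : 2 * Real.exp (-(2 * (7 / 4))) ≤ (1 / 4) ^ 2 := by
  have hpow : (2.718 : ℝ) ^ 7 ≤ Real.exp 1 ^ 7 :=
    pow_le_pow_left₀ (by norm_num) (by linarith [Real.exp_one_gt_d9]) 7
  have hsq : Real.exp (7 / 2) ^ 2 = Real.exp 1 ^ 7 := by
    rw [← Real.exp_nat_mul, ← Real.exp_nat_mul]
    norm_num
  have h32 : (32 : ℝ) ≤ Real.exp (7 / 2) :=
    le_of_sq_le_sq (by rw [hsq]; norm_num at hpow ⊢; linarith) (Real.exp_pos _).le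
  rw [Real.exp_neg]
  norm_num at h32 ⊢
  rw [← div_eq_mul_inv, div_le_iff₀ (Real.exp_pos _)]
  linarith

/-- `X Y = X' Y' + (X - X') Y + X' (Y - Y')` with `X'`, `Y'` the truncations; the last two terms
have expectation `1 / 4` times an element of the ball because the truncated part of a Rademacher
sum of unit variance has second moment at most `2 exp (-7 / 2) ≤ (1 / 4) ^ 2`. -/
lemma exists_mem_maxNormUnitBall_mul_transpose_eq_expect_truncate_add {κ : Type} [Fintype κ]
    [DecidableEq κ] {U : Matrix A κ ℝ} {V : Matrix B κ ℝ} (hU : ∀ i, U i ⬝ᵥ U i ≤ 1)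
    (hV : ∀ j, V j ⬝ᵥ V j ≤ 1) :
    ∃ M₁ ∈ maxNormUnitBall A B, ∃ M₂ ∈ maxNormUnitBall A B, U * Vᵀ =
      (𝔼 ε : κ → ℤˣ, vecMulVec (fun i => truncate (7 / 4) (signVec ε ⬝ᵥ U i))
        (fun j => truncate (7 / 4) (signVec ε ⬝ᵥ V j))) + (1 / 4 : ℝ) • M₁ + (1 / 4 : ℝ) • M₂ := by
  let X : (κ → ℤˣ) → A → ℝ := fun ε i => signVec ε ⬝ᵥ U i
  let Y : (κ → ℤˣ) → B → ℝ := fun ε j => signVec ε ⬝ᵥ V j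
  let X' : (κ → ℤˣ) → A → ℝ := fun ε i => truncate (7 / 4) (X ε i)
  let Y' : (κ → ℤˣ) → B → ℝ := fun ε j => truncate (7 / 4) (Y ε j)
  have hc : (0 : ℝ) ≤ 7 / 4 := by norm_num
  have hsq {u : κ → ℝ} (hu : u ⬝ᵥ u ≤ 1) : 𝔼 ε : κ → ℤˣ, (signVec ε ⬝ᵥ u) ^ 2 ≤ 1 ^ 2 := by
    simpa only [sq, expect_dotProduct_mul_dotProduct, one_mul] using hu
  have hsq' {u : κ → ℝ} (hu : u ⬝ᵥ u ≤ 1) :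
      𝔼 ε : κ → ℤˣ, truncate (7 / 4) (signVec ε ⬝ᵥ u) ^ 2 ≤ 1 ^ 2 :=
    (Finset.expect_le_expect fun ε _ => sq_le_sq.2 (abs_truncate_le_abs hc _)).trans (hsq hu)
  have htail {u : κ → ℝ} (hu : u ⬝ᵥ u ≤ 1) :
      𝔼 ε : κ → ℤˣ, (signVec ε ⬝ᵥ u - truncate (7 / 4) (signVec ε ⬝ᵥ u)) ^ 2 ≤ (1 / 4) ^ 2 :=
    (expect_sq_signVec_dotProduct_sub_truncate_le hu hc).trans two_mul_exp_neg_seven_halves_le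
  obtain ⟨M₁, hM₁, hXY⟩ := exists_mem_maxNormUnitBall_expect_vecMulVec_eq_smul
    (X := fun ε => X ε - X' ε) (Y := Y) (fun i => htail (hU i)) (fun j => hsq (hV j))
  obtain ⟨M₂, hM₂, hX'Y⟩ := exists_mem_maxNormUnitBall_expect_vecMulVec_eq_smul
    (X := X') (Y := fun ε => Y ε - Y' ε) (fun i => hsq' (hU i)) (fun j => htail (hV j))
  rw [mul_one] at hXY
  rw [one_mul] at hX'Y
  refine ⟨M₁, hM₁, M₂, hM₂, ?_⟩
  rw [← hXY, ← hX'Y, ← Finset.expect_add_distrib, ← Finset.expect_add_distrib,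
    ← expect_vecMulVec_signVec_dotProduct]
  refine Finset.expect_congr rfl fun ε _ => ?_
  simp only [sub_vecMulVec, vecMulVec_sub]
  abel

variable [Finite A] [Finite B]

lemma bddAbove_image_maxNormUnitBall (φ : Matrix A B ℝ →ₗ[ℝ] ℝ) :
    BddAbove (φ '' maxNormUnitBall A B) := by
  classical
  have := Fintype.ofFinite A
  have := Fintype.ofFinite B
  refine ⟨∑ i, ∑ j, |φ (Matrix.single i j 1)|, ?_⟩
  rintro _ ⟨M, hM, rfl⟩
  rw [matrix_eq_sum_single M, map_sum]
  simp only [map_sum]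
  refine Finset.sum_le_sum fun i _ => Finset.sum_le_sum fun j _ => (le_abs_self _).trans ?_
  rw [← mul_one (M i j), ← smul_eq_mul, ← smul_single, map_smul, smul_eq_mul, abs_mul]
  exact mul_le_of_le_one_left (abs_nonneg _) (abs_le_one_of_mem_maxNormUnitBall hM i j)

lemma map_le_mul_of_map_signVec_le {ℓ : (A → ℝ) →ₗ[ℝ] ℝ} {D c : ℝ}
    (hD : ∀ σ, ℓ (signVec σ) ≤ D) {x : A → ℝ} (hx : ∀ i, |x i| ≤ c) (hc : 0 ≤ c) :
    ℓ x ≤ c * D := by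
  classical
  have := Fintype.ofFinite A
  let a : A → ℝ := fun i => ℓ fun j => if i = j then 1 else 0
  let σ : A → ℤˣ := fun i => if 0 ≤ a i then 1 else -1
  have hσ (i : A) : signVec σ i * a i = |a i| := by
    by_cases h : 0 ≤ a i
    · simp [signVec, σ, h, abs_of_nonneg h]
    · simp [signVec, σ, h, abs_of_neg (not_le.1 h)]
  calc ℓ x = ∑ i, x i * a i := ℓ.pi_apply_eq_sum_univ x
    _ ≤ ∑ i, c * |a i| := Finset.sum_le_sum fun i _ => (le_abs_self _).trans <| by
        rw [abs_mul]
        exact mul_le_mul_of_nonneg_right (hx i) (abs_nonneg _)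
    _ = c * ℓ (signVec σ) := by
        rw [← Finset.mul_sum, ℓ.pi_apply_eq_sum_univ (signVec σ)]
        exact congrArg (c * ·) (Finset.sum_congr rfl fun i _ => (hσ i).symm)
    _ ≤ c * D := by
        gcongr
        exact hD σ

variable {φ : Matrix A B ℝ →ₗ[ℝ] ℝ} {D : ℝ}

lemma map_vecMulVec_le_mul (hD : ∀ σ τ, φ (vecMulVec (signVec σ) (signVec τ)) ≤ D) {x : A → ℝ}
    {y : B → ℝ} {c : ℝ} (hx : ∀ i, |x i| ≤ c) (hy : ∀ j, |y j| ≤ c) (hc : 0 ≤ c) :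
    φ (vecMulVec x y) ≤ c ^ 2 * D := by
  rw [sq, mul_assoc]
  refine map_le_mul_of_map_signVec_le (ℓ := φ ∘ₗ (vecMulVecBilin ℝ ℝ).flip y) (fun σ => ?_) hx hc
  exact map_le_mul_of_map_signVec_le (ℓ := φ ∘ₗ vecMulVecBilin ℝ ℝ (signVec σ)) (hD σ) hy hc

lemma nonneg_of_map_vecMulVec_signVec_le
    (hD : ∀ σ τ, φ (vecMulVec (signVec σ) (signVec τ)) ≤ D) : 0 ≤ D := by
  simpa using map_vecMulVec_le_mul (x := 0) (y := 0) hD (c := 1) (by simp) (by simp) zero_le_one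

lemma map_le_add_of_mem_maxNormUnitBall
    (hD : ∀ σ τ, φ (vecMulVec (signVec σ) (signVec τ)) ≤ D) {G : ℝ}
    (hG : ∀ M ∈ maxNormUnitBall A B, φ M ≤ G) {M : Matrix A B ℝ} (hM : M ∈ maxNormUnitBall A B) :
    φ M ≤ 49 / 16 * D + G / 2 := by
  classical
  obtain ⟨κ, _, U, V, hU, hV, rfl⟩ := hM
  obtain ⟨M₁, hM₁, M₂, hM₂, hdecomp⟩ :=
    exists_mem_maxNormUnitBall_mul_transpose_eq_expect_truncate_add hU hV
  have hc : (0 : ℝ) ≤ 7 / 4 := by norm_num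
  have hbounded : φ (𝔼 ε : κ → ℤˣ, vecMulVec (fun i => truncate (7 / 4) (signVec ε ⬝ᵥ U i))
      (fun j => truncate (7 / 4) (signVec ε ⬝ᵥ V j))) ≤ (7 / 4) ^ 2 * D := by
    rw [← LinearMap.restrictScalars_apply ℚ≥0, map_expect]
    exact Finset.expect_le Finset.univ_nonempty fun ε _ =>
      map_vecMulVec_le_mul hD (fun _ => abs_truncate_le hc _) (fun _ => abs_truncate_le hc _) hc
  rw [hdecomp, map_add, map_add, map_smul, map_smul, smul_eq_mul, smul_eq_mul]
  linarith [hG M₁ hM₁, hG M₂ hM₂]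

theorem grothendieck_inequality (hD : ∀ σ τ, φ (vecMulVec (signVec σ) (signVec τ)) ≤ D)
    {M : Matrix A B ℝ} (hM : M ∈ maxNormUnitBall A B) : φ M ≤ 49 / 8 * D := by
  have hle (N : Matrix A B ℝ) (hN : N ∈ maxNormUnitBall A B) :
      φ N ≤ sSup (φ '' maxNormUnitBall A B) :=
    le_csSup (bddAbove_image_maxNormUnitBall φ) ⟨N, hN, rfl⟩
  have hsup : sSup (φ '' maxNormUnitBall A B) ≤
      49 / 16 * D + sSup (φ '' maxNormUnitBall A B) / 2 := by
    refine csSup_le (Set.Nonempty.image _ ⟨M, hM⟩) ?_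
    rintro _ ⟨N, hN, rfl⟩
    exact map_le_add_of_mem_maxNormUnitBall hD hle hN
  linarith [hle M hM]

end Grothendieck

section MaxNorm

variable {d1 d2 : ℕ}

lemma abs_apply_le_linfNorm (M : Matrix (Fin d1) (Fin d2) ℝ) (k : Fin d1) (l : Fin d2) :
    |M k l| ≤ linfNorm M :=
  (le_ciSup (f := fun l => |M k l|) (Set.finite_range _).bddAbove l).trans
    (le_ciSup (f := fun k => ⨆ l, |M k l|) (Set.finite_range _).bddAbove k)

lemma rowMaxNorm_nonneg {n k : ℕ} (U : Matrix (Fin n) (Fin k) ℝ) : 0 ≤ rowMaxNorm U :=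
  Real.iSup_nonneg fun _ => Real.sqrt_nonneg _

lemma dotProduct_self_le_rowMaxNorm_sq {n k : ℕ} (U : Matrix (Fin n) (Fin k) ℝ) (i : Fin n) :
    U i ⬝ᵥ U i ≤ rowMaxNorm U ^ 2 := by
  simp only [dotProduct, ← sq]
  exact (Real.sqrt_le_left (rowMaxNorm_nonneg U)).1 <|
    le_ciSup (f := fun i => √(∑ j, U i j ^ 2)) (Set.finite_range _).bddAbove i

lemma maxNorm_zero : maxNorm (0 : Matrix (Fin d1) (Fin d2) ℝ) = 0 := by
  refine IsLeast.csInf_eq ⟨⟨1, 0, 0, one_pos, by simp, by simp [rowMaxNorm]⟩, ?_⟩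
  rintro _ ⟨k, U, V, -, -, rfl⟩
  exact mul_nonneg (rowMaxNorm_nonneg U) (rowMaxNorm_nonneg V)

lemma exists_eq_mul_transpose (M : Matrix (Fin d1) (Fin d2) ℝ) :
    ∃ (k : ℕ) (U : Matrix (Fin d1) (Fin k) ℝ) (V : Matrix (Fin d2) (Fin k) ℝ),
      0 < k ∧ M = U * Vᵀ := by
  rcases d1 with _ | d
  · exact ⟨1, 0, 0, one_pos, Subsingleton.elim _ _⟩
  · exact ⟨d + 1, 1, Mᵀ, d.succ_pos, by simp⟩

lemma map_le_mul_maxNorm {φ : Matrix (Fin d1) (Fin d2) ℝ →ₗ[ℝ] ℝ} {D : ℝ}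
    (hD : ∀ σ τ, φ (vecMulVec (signVec σ) (signVec τ)) ≤ D) (M : Matrix (Fin d1) (Fin d2) ℝ) :
    φ M ≤ 49 / 8 * D * maxNorm M := by
  have hD₀ := nonneg_of_map_vecMulVec_signVec_le hD
  obtain ⟨k, U, V, hk, hM⟩ := exists_eq_mul_transpose M
  rw [maxNorm, ← smul_eq_mul (49 / 8 * D), ← Real.sInf_smul_of_nonneg (by positivity)]
  refine le_csInf (Set.Nonempty.smul_set ⟨_, k, U, V, hk, hM, rfl⟩) ?_
  rintro _ ⟨_, ⟨k, U, V, -, rfl, rfl⟩, rfl⟩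
  obtain ⟨N, hN, hUV⟩ := exists_mem_maxNormUnitBall_mul_transpose_eq_smul
    (dotProduct_self_le_rowMaxNorm_sq U) (dotProduct_self_le_rowMaxNorm_sq V)
  have hUV₀ := mul_nonneg (rowMaxNorm_nonneg U) (rowMaxNorm_nonneg V)
  calc φ (U * Vᵀ) = rowMaxNorm U * rowMaxNorm V * φ N := by rw [hUV, map_smul, smul_eq_mul]
    _ ≤ rowMaxNorm U * rowMaxNorm V * (49 / 8 * D) := by
        gcongr
        exact grothendieck_inequality hD hN
    _ = 49 / 8 * D * (rowMaxNorm U * rowMaxNorm V) := mul_comm _ _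

variable {T : Type*} [Fintype T] [DecidableEq T]

lemma rademacherAverage_signVec_mul_signVec_le (S : T → Fin d1 × Fin d2) :
    rademacherAverage (fun (στ : (Fin d1 → ℤˣ) × (Fin d2 → ℤˣ)) t =>
      signVec στ.1 (S t).1 * signVec στ.2 (S t).2) ≤ 6 / 5 * √(Fintype.card T * (d1 + d2)) := by
  have hcard : Real.log (Fintype.card ((Fin d1 → ℤˣ) × (Fin d2 → ℤˣ))) =
      (d1 + d2) * Real.log 2 := by
    simp only [Fintype.card_prod, Fintype.card_fun, Fintype.card_units_int, Fintype.card_fin]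
    push_cast
    rw [← pow_add, Real.log_pow, Nat.cast_add]
  have hlog : 2 * Real.log 2 ≤ (6 / 5) ^ 2 := by linarith [Real.log_two_lt_d9]
  refine (rademacherAverage_le_sqrt (v := Fintype.card T) fun στ => ?_).trans ?_
  · simp [dotProduct, mul_mul_mul_comm, signVec_mul_self]
  · have hnonneg : (0 : ℝ) ≤ Fintype.card T * (d1 + d2) := by positivity
    rw [hcard, Real.sqrt_le_left (by positivity), mul_pow, Real.sq_sqrt hnonneg]
    linarith [mul_le_mul_of_nonneg_right hlog hnonneg]

lemma rademacherAverage_le_of_maxNorm_le {I : Type*} {M : I → Matrix (Fin d1) (Fin d2) ℝ} {R : ℝ}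
    (hR : 0 ≤ R) (hM : ∀ i, maxNorm (M i) ≤ R) (S : T → Fin d1 × Fin d2) :
    rademacherAverage (fun i t => M i (S t).1 (S t).2) ≤
      15 / 2 * R * √(Fintype.card T * (d1 + d2)) := by
  let s : (Fin d1 → ℤˣ) × (Fin d2 → ℤˣ) → T → ℝ := fun στ t =>
    signVec στ.1 (S t).1 * signVec στ.2 (S t).2
  let φ : (T → ℤˣ) → Matrix (Fin d1) (Fin d2) ℝ →ₗ[ℝ] ℝ := fun ε =>
    ∑ t, signVec ε t • entryLinearMap ℝ ℝ (S t).1 (S t).2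
  have hφ (ε : T → ℤˣ) (N : Matrix (Fin d1) (Fin d2) ℝ) :
      φ ε N = signVec ε ⬝ᵥ fun t => N (S t).1 (S t).2 := by
    simp [φ, dotProduct]
  have hsup (ε : T → ℤˣ) : ⨆ i, signVec ε ⬝ᵥ (fun t => M i (S t).1 (S t).2) ≤
      49 / 8 * R * ⨆ στ, signVec ε ⬝ᵥ s στ := by
    have hD (σ τ) : φ ε (vecMulVec (signVec σ) (signVec τ)) ≤ ⨆ στ, signVec ε ⬝ᵥ s στ :=
      (hφ ε _).trans_le <|
        le_ciSup (f := fun στ => signVec ε ⬝ᵥ s στ) (Set.finite_range _).bddAbove (σ, τ)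
    have hD₀ := nonneg_of_map_vecMulVec_signVec_le hD
    refine Real.iSup_le (fun i => ?_) (by positivity)
    calc signVec ε ⬝ᵥ (fun t => M i (S t).1 (S t).2)
        ≤ 49 / 8 * (⨆ στ, signVec ε ⬝ᵥ s στ) * maxNorm (M i) :=
          (hφ ε _).symm.trans_le (map_le_mul_maxNorm hD _)
      _ ≤ 49 / 8 * (⨆ στ, signVec ε ⬝ᵥ s στ) * R := by
          gcongr
          exact hM i
      _ = 49 / 8 * R * ⨆ στ, signVec ε ⬝ᵥ s στ := mul_right_comm _ _ _
  calc rademacherAverage (fun i t => M i (S t).1 (S t).2)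
      ≤ 49 / 8 * R * rademacherAverage s :=
        (Finset.expect_le_expect fun ε _ => hsup ε).trans_eq (Finset.mul_expect _ _ _).symm
    _ ≤ 49 / 8 * R * (6 / 5 * √(Fintype.card T * (d1 + d2))) := by
        gcongr
        exact rademacherAverage_signVec_mul_signVec_le S
    _ ≤ 15 / 2 * R * √(Fintype.card T * (d1 + d2)) := by
        linarith [show 0 ≤ R * √(Fintype.card T * (d1 + d2)) by positivity]

lemma sqrt_mul_div_self {n : ℕ} (hn : 0 < n) (d : ℝ) : √(n * d) / n = √(d / n) := by
  rw [← Real.sqrt_sq (Nat.cast_nonneg n), ← Real.sqrt_div' _ (sq_nonneg _), sq,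
    Real.sqrt_mul_self (Nat.cast_nonneg n), mul_div_mul_left _ _ (by positivity)]

theorem one_sub_le_sum_indicator_ciSup_maxNorm_le {n : ℕ} (hn : 0 < n) {α R : ℝ} (hα : 0 ≤ α)
    (hR : 0 ≤ R) {p : Fin d1 × Fin d2 → ℝ} (hp : p ∈ stdSimplex ℝ (Fin d1 × Fin d2))
    {ℓ : Fin d1 × Fin d2 → ℝ → ℝ} {L U : ℝ} (hL : 0 ≤ L) (hU : 0 < U)
    (hℓ : ∀ x, ∀ a ∈ Set.Icc (-α) α, ℓ x a ∈ Set.Icc 0 U)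
    (hlip : ∀ x, ∀ a ∈ Set.Icc (-α) α, ∀ b ∈ Set.Icc (-α) α, |ℓ x a - ℓ x b| ≤ L * |a - b|)
    {δ : ℝ} (hδ : 0 < δ) :
    1 - δ ≤ ∑ S, {S : Fin n → Fin d1 × Fin d2 |
      ⨆ M : {M : Matrix (Fin d1) (Fin d2) ℝ | linfNorm M ≤ α ∧ maxNorm M ≤ R},
        (∑ x, p x * ℓ x (M.1 x.1 x.2) - (1 / n : ℝ) * ∑ t, ℓ (S t) (M.1 (S t).1 (S t).2)) ≤
      17 * L * R * √((d1 + d2) / n) + U * √(8 * Real.log (2 / δ) / n)}.indicator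
        (iidWeight p) S := by
  let K := {M : Matrix (Fin d1) (Fin d2) ℝ | linfNorm M ≤ α ∧ maxNorm M ≤ R}
  have : Nonempty K := ⟨0, by simpa [linfNorm], maxNorm_zero.trans_le hR⟩
  have hm (M : K) (x : Fin d1 × Fin d2) : M.1 x.1 x.2 ∈ Set.Icc (-α) α :=
    abs_le.1 ((abs_apply_le_linfNorm M.1 x.1 x.2).trans M.2.1)
  have hconst : 2 * (L * (15 / 2 * R * √(Fintype.card (Fin n) * (d1 + d2)))) / n ≤
      17 * L * R * √((d1 + d2) / n) := by
    rw [Fintype.card_fin, ← sqrt_mul_div_self hn]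
    have hnonneg : 0 ≤ L * R * (√(n * (d1 + d2)) / n) := by positivity
    calc _ = 15 * (L * R * (√(n * (d1 + d2)) / n)) := by ring
      _ ≤ _ := by linarith
  have hdev := one_sub_le_sum_indicator_ciSup_sub_mean_le hn hp hU
    (g := fun (M : K) x => ℓ x (M.1 x.1 x.2)) (fun M x => hℓ x _ (hm M x)) hL
    (fun M N x => hlip x _ (hm M x) _ (hm N x))
    (fun x => ⟨α, by rintro _ ⟨M, rfl⟩; exact abs_le.2 (hm M x)⟩)
    (fun S => rademacherAverage_le_of_maxNorm_le hR (fun M : K => M.2.2) S) hδ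
  refine hdev.trans (Finset.sum_le_sum fun S _ => Set.indicator_le_indicator_of_subset
    (fun S hS => ?_) (fun S => (iidWeight_mem_stdSimplex hp).1 S) S)
  exact le_trans hS (add_le_add_left hconst _)

end MaxNorm

section OneBitLoss

variable {F F' : ℝ → ℝ} {s : Set ℝ} {x y z : ℝ}

lemma oneBitLoss_one (F : ℝ → ℝ) (x : ℝ) : oneBitLoss F x 1 = -Real.log (F x) := by
  norm_num [oneBitLoss]

lemma oneBitLoss_neg_one (F : ℝ → ℝ) (x : ℝ) : oneBitLoss F x (-1) = -Real.log (1 - F x) := by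
  norm_num [oneBitLoss]

lemma log_one_div_mul_one_sub (hx : 0 < F x ∧ F x < 1) :
    Real.log (1 / (F x * (1 - F x))) = oneBitLoss F x 1 + oneBitLoss F x (-1) := by
  rw [oneBitLoss_one, oneBitLoss_neg_one, one_div, Real.log_inv,
    Real.log_mul hx.1.ne' (sub_pos.2 hx.2).ne', neg_add]

lemma oneBitLoss_pos (hx : 0 < F x ∧ F x < 1) (hz : z = 1 ∨ z = -1) : 0 < oneBitLoss F x z := by
  rcases hz with rfl | rfl
  · rw [oneBitLoss_one]
    exact neg_pos.2 (Real.log_neg hx.1 hx.2)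
  · rw [oneBitLoss_neg_one]
    exact neg_pos.2 (Real.log_neg (sub_pos.2 hx.2) (sub_lt_self 1 hx.1))

lemma oneBitLoss_mem_Icc {U : ℝ} (hx : 0 < F x ∧ F x < 1)
    (hU : Real.log (1 / (F x * (1 - F x))) ≤ U) (hz : z = 1 ∨ z = -1) :
    oneBitLoss F x z ∈ Set.Icc 0 U := by
  refine ⟨(oneBitLoss_pos hx hz).le, le_trans ?_ hU⟩
  rw [log_one_div_mul_one_sub hx]
  rcases hz with rfl | rfl
  · exact le_add_of_nonneg_right (oneBitLoss_pos hx (.inr rfl)).le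
  · exact le_add_of_nonneg_left (oneBitLoss_pos hx (.inl rfl)).le

lemma abs_log_sub_log_le {L : ℝ} (hs : Convex ℝ s) (hpos : ∀ x ∈ s, 0 < F x)
    (hF : ∀ x ∈ s, HasDerivWithinAt F (F' x) s x) (hL : ∀ x ∈ s, |F' x| / F x ≤ L) (hx : x ∈ s)
    (hy : y ∈ s) : |Real.log (F x) - Real.log (F y)| ≤ L * |x - y| := by
  refine hs.norm_image_sub_le_of_norm_hasDerivWithin_le (f := fun x => Real.log (F x))
    (fun w hw => (hF w hw).log (hpos w hw).ne') (fun w hw => ?_) hy hx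
  rw [Real.norm_eq_abs, abs_div, abs_of_pos (hpos w hw)]
  exact hL w hw

lemma abs_oneBitLoss_sub_le {L : ℝ} (hs : Convex ℝ s) (hrange : ∀ x ∈ s, 0 < F x ∧ F x < 1)
    (hF : ∀ x ∈ s, HasDerivWithinAt F (F' x) s x)
    (hL : ∀ x ∈ s, |F' x| / (F x * (1 - F x)) ≤ L) (hz : z = 1 ∨ z = -1) (hx : x ∈ s)
    (hy : y ∈ s) : |oneBitLoss F x z - oneBitLoss F y z| ≤ L * |x - y| := by
  have hpos (w) (hw : w ∈ s) : 0 < F w * (1 - F w) :=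
    mul_pos (hrange w hw).1 (sub_pos.2 (hrange w hw).2)
  rcases hz with rfl | rfl
  · rw [oneBitLoss_one, oneBitLoss_one, neg_sub_neg, abs_sub_comm]
    refine abs_log_sub_log_le hs (fun w hw => (hrange w hw).1) hF (fun w hw => ?_) hx hy
    refine (div_le_div_of_nonneg_left (abs_nonneg _) (hpos w hw) ?_).trans (hL w hw)
    exact mul_le_of_le_one_right (hrange w hw).1.le (sub_le_self 1 (hrange w hw).1.le)
  · rw [oneBitLoss_neg_one, oneBitLoss_neg_one, neg_sub_neg, abs_sub_comm]
    refine abs_log_sub_log_le hs (F := fun w => 1 - F w) (F' := fun w => -F' w)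
      (fun w hw => sub_pos.2 (hrange w hw).2) (fun w hw => (hF w hw).const_sub 1)
      (fun w hw => ?_) hx hy
    rw [abs_neg]
    refine (div_le_div_of_nonneg_left (abs_nonneg _) (hpos w hw) ?_).trans (hL w hw)
    exact mul_le_of_le_one_left (sub_pos.2 (hrange w hw).2).le (hrange w hw).2.le

end OneBitLoss

theorem uniform_deviation_bound_maxNorm_ball_general {d1 d2 n : ℕ} (hn : 0 < n) {α R : ℝ}
    (hα : 0 ≤ α) (hR : 0 ≤ R) {F F' : ℝ → ℝ}
    (hF : ∀ x ∈ Set.Icc (-α) α, HasDerivWithinAt F (F' x) (Set.Icc (-α) α) x)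
    (hrange : ∀ x ∈ Set.Icc (-α) α, 0 < F x ∧ F x < 1) {Lα Uα : ℝ}
    (hL : ∀ x ∈ Set.Icc (-α) α, |F' x| / (F x * (1 - F x)) ≤ Lα)
    (hU : ∀ x ∈ Set.Icc (-α) α, Real.log (1 / (F x * (1 - F x))) ≤ Uα)
    {Y : Matrix (Fin d1) (Fin d2) ℝ} (hY : ∀ k l, Y k l = 1 ∨ Y k l = -1)
    {π : Fin d1 → Fin d2 → ℝ} (hπ : ∀ k l, 0 ≤ π k l) (hπ1 : ∑ k, ∑ l, π k l = 1)
    {δ : ℝ} (hδ : 0 < δ) :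
    1 - δ ≤ ∑ S : Fin n → Fin d1 × Fin d2,
      {S : Fin n → Fin d1 × Fin d2 |
        sSup ((fun M : Matrix (Fin d1) (Fin d2) ℝ =>
            (∑ k, ∑ l, π k l * oneBitLoss F (M k l) (Y k l)) -
              (1 / n : ℝ) * ∑ t, oneBitLoss F (M (S t).1 (S t).2) (Y (S t).1 (S t).2)) ''
          {M : Matrix (Fin d1) (Fin d2) ℝ | linfNorm M ≤ α ∧ maxNorm M ≤ R}) ≤
        17 * Lα * R * √((d1 + d2 : ℝ) / n) + Uα * √(8 * Real.log (2 / δ) / n)}.indicator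
      (fun S => ∏ t, π (S t).1 (S t).2) S := by
  have hp : (fun x => π x.1 x.2) ∈ stdSimplex ℝ (Fin d1 × Fin d2) :=
    ⟨fun x => hπ x.1 x.2, (Fintype.sum_prod_type _).trans hπ1⟩
  have h0 : (0 : ℝ) ∈ Set.Icc (-α) α := ⟨neg_nonpos.2 hα, hα⟩
  have hL0 : 0 ≤ Lα := (div_nonneg (abs_nonneg _) (mul_pos (hrange 0 h0).1
    (sub_pos.2 (hrange 0 h0).2)).le).trans (hL 0 h0)
  have hU0 : 0 < Uα := (oneBitLoss_pos (hrange 0 h0) (.inl rfl)).trans_le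
    (oneBitLoss_mem_Icc (hrange 0 h0) (hU 0 h0) (.inl rfl)).2
  have hdev := one_sub_le_sum_indicator_ciSup_maxNorm_le hn hα hR hp hL0 hU0
    (ℓ := fun x a => oneBitLoss F a (Y x.1 x.2))
    (fun x a ha => oneBitLoss_mem_Icc (hrange a ha) (hU a ha) (hY x.1 x.2))
    (fun x a ha b hb => abs_oneBitLoss_sub_le (convex_Icc _ _) hrange hF hL (hY x.1 x.2) ha hb) hδ
  simp only [Fintype.sum_prod_type] at hdev
  simp only [sSup_image']
  exact hdev

/-- uniform deviation bound over the max-norm ball `K_max(α,R)`. For a fixed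
sign matrix `Y`, with probability at least `1 − δ` over the i.i.d. draw (from `Π`) of the
sample `S` of `n` index pairs,
`sup_{M ∈ K_max(α,R)} [ Σ_{k,l} π_{kl} g(M_{k,l}; Y_{k,l}) − (1/n) Σ_t g(M_{i_t,j_t}; Y_{i_t,j_t}) ]
  ≤ 17 L_α R √(d/n) + U_α √(8 log(2/δ)/n)`, where `d = d1 + d2`. -/
theorem uniform_deviation_bound_maxNorm_ball
    (d1 d2 n : ℕ) (hn : 2 < n) (hn' : n ≤ d1 * d2)
    (α R : ℝ) (hα : 0 < α) (hR : 0 < R)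
    (F : ℝ → ℝ) (hdiff : Differentiable ℝ F) (hrange : ∀ x, 0 < F x ∧ F x < 1)
    (hF' : ∀ x ∈ Set.Icc (-α) α, deriv F x ≠ 0)
    (Lα Uα : ℝ)
    (hL : IsLUB ((fun x => |deriv F x| / (F x * (1 - F x))) '' Set.Icc (-α) α) Lα)
    (hU : IsLUB ((fun x => Real.log (1 / (F x * (1 - F x)))) '' Set.Icc (-α) α) Uα)
    (Y : Matrix (Fin d1) (Fin d2) ℝ) (hY : ∀ k l, Y k l = 1 ∨ Y k l = -1)
    (π : Fin d1 → Fin d2 → ℝ) (hπ : ∀ k l, 0 ≤ π k l) (hπ1 : ∑ k, ∑ l, π k l = 1)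
    (δ : ℝ) (hδ : 0 < δ) :
    1 - δ ≤
      ∑ S : Fin n → Fin d1 × Fin d2,
        Set.indicator
          { S : Fin n → Fin d1 × Fin d2 |
            sSup ((fun M : Matrix (Fin d1) (Fin d2) ℝ =>
                (∑ k, ∑ l, π k l * oneBitLoss F (M k l) (Y k l)) -
                  (1 / n : ℝ) *
                    ∑ t, oneBitLoss F (M (S t).1 (S t).2) (Y (S t).1 (S t).2)) ''
              { M : Matrix (Fin d1) (Fin d2) ℝ | linfNorm M ≤ α ∧ maxNorm M ≤ R }) ≤
              17 * Lα * R * Real.sqrt ((d1 + d2 : ℝ) / n) +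
                Uα * Real.sqrt (8 * Real.log (2 / δ) / n) }
          (fun S => ∏ t, π (S t).1 (S t).2) S :=
  uniform_deviation_bound_maxNorm_ball_general (by omega) hα.le hR.le
    (fun x _ => (hdiff x).hasDerivAt.hasDerivWithinAt) (fun x _ => hrange x)
    (fun x hx => hL.1 ⟨x, hx, rfl⟩) (fun x hx => hU.1 ⟨x, hx, rfl⟩) hY hπ hπ1 hδ
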